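/- Let λ ≥ 2 and n ≥ 1 be integers. Let S be a rational trigonometric polynomial nonnegative on ℝⁿ, let s be a rational trigonometric polynomial with |s(ξ)|² = 1/S(ξ) wherever defined, let p_1, …, p_{λ^n} be rational trigonometric polynomials, let ν_1, …, ν_{λ^n} enumerate Λ, and define τ(ξ) = (λ^{−n} Σ_{l=1}^{λ^n} p_l(λξ) e^{i ν_l·ξ}) / conj(s(ξ)). Then for all ξ at which both sides are defined, Σ_{γ∈Γ} |τ(ξ + γ)|² / S(ξ + γ) = λ^{−n} Σ_{l=1}^{λ^n} |p_l(λξ)|². -/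

import Mathlib

open MeasureTheory Finset Filter Topology

noncomputable section

/-- `f` is a trigonometric polynomial on ℝⁿ: a finite sum ξ ↦ Σ_{k∈F} h(k) e^{−i k·ξ}. -/
def IsTrigPoly (n : ℕ) (f : (Fin n → ℝ) → ℂ) : Prop :=
  ∃ (F : Finset (Fin n → ℤ)) (h : (Fin n → ℤ) → ℂ),
    ∀ ξ : Fin n → ℝ,
      f ξ = ∑ k ∈ F, h k * Complex.exp (-Complex.I * ∑ i, (k i : ℂ) * (ξ i : ℂ))

/-- Λ = {0,…,λ−1}ⁿ as a finite subset of ℤⁿ. -/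
def Lambda (lam n : ℕ) : Finset (Fin n → ℤ) :=
  Fintype.piFinset fun _ => Finset.Ico (0 : ℤ) (lam : ℤ)

/-- The translate ξ + (2π/λ)·ρ, i.e. ξ + γ for γ = (2π/λ)ρ ∈ Γ. -/
def gshift (lam n : ℕ) (ξ : Fin n → ℝ) (ρ : Fin n → ℤ) : Fin n → ℝ :=
  fun i => ξ i + (2 * Real.pi / lam) * (ρ i : ℝ)

/-- e^{i ν·ξ}. -/
def eI (n : ℕ) (ν : Fin n → ℤ) (ξ : Fin n → ℝ) : ℂ :=
  Complex.exp (Complex.I * ∑ i, (ν i : ℂ) * (ξ i : ℂ))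

/-- The dilate λ·ξ. -/
def dil (lam n : ℕ) (ξ : Fin n → ℝ) : Fin n → ℝ := fun i => (lam : ℝ) * ξ i
/-- A rational trigonometric polynomial: a quotient of two trigonometric polynomials
(with denominator not identically zero).  Its value at ξ (using Lean's total division,
with junk value 0 where the denominator vanishes) is `num ξ / den ξ`; it is *defined*
at ξ precisely when `den ξ ≠ 0`. -/
structure RatTrigPoly (n : ℕ) where
  num : (Fin n → ℝ) → ℂ
  den : (Fin n → ℝ) → ℂ
  num_trig : IsTrigPoly n num
  den_trig : IsTrigPoly n den
  den_ne : ∃ ξ, den ξ ≠ 0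

/-- Pointwise value of a rational trigonometric polynomial. -/
def RatTrigPoly.eval {n : ℕ} (f : RatTrigPoly n) (ξ : Fin n → ℝ) : ℂ := f.num ξ / f.den ξ

instance {n : ℕ} : CoeFun (RatTrigPoly n) (fun _ => (Fin n → ℝ) → ℂ) := ⟨RatTrigPoly.eval⟩

/-- `f` is defined at `ξ` iff its denominator does not vanish there. -/
def RatTrigPoly.DefinedAt {n : ℕ} (f : RatTrigPoly n) (ξ : Fin n → ℝ) : Prop := f.den ξ ≠ 0

/-!
The `p l` are `2πℤⁿ`-periodic, so `p l (λ(ξ + γ)) = p l (λξ)` for `γ ∈ (2π/λ)ℤⁿ`, and since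
`|s|² S = 1` the summand at `γ` is `λ⁻²ⁿ |∑ l, p l (λξ) e^{iν_l·(ξ+γ)}|²`: the squared modulus of a
combination of exponentials with coefficients independent of `γ`. As `γ` runs over `Γ`, exponentials
with frequencies incongruent modulo `λ` are orthogonal of squared length `λⁿ`, so Parseval's
identity gives the result.
-/

open scoped ComplexConjugate

/-- `2πℤⁿ`-periodicity of a function on `ℝⁿ`; it makes `ξ ↦ f (λξ)` invariant under translation by
`γ ∈ (2π/λ)ℤⁿ`. Every vector of the lattice is quantified over, rather than a basis of it. -/
def IsTwoPiPeriodic {n : ℕ} {α : Type*} (f : (Fin n → ℝ) → α) : Prop :=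
  ∀ k : Fin n → ℤ, Function.Periodic f fun i => 2 * Real.pi * k i

theorem IsTrigPoly.isTwoPiPeriodic {n : ℕ} {f : (Fin n → ℝ) → ℂ} (hf : IsTrigPoly n f) :
    IsTwoPiPeriodic f := by
  intro k ξ
  obtain ⟨F, h, hf⟩ := hf
  rw [hf, hf]
  refine sum_congr rfl fun m _ => congrArg (h m * ·) ?_
  rw [Complex.exp_eq_exp_iff_exists_int]
  refine ⟨-∑ i, m i * k i, ?_⟩
  push_cast
  simp only [Pi.add_apply, mul_sum, sum_mul, neg_mul, ← sum_neg_distrib, ← sum_add_distrib]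
  refine sum_congr rfl fun i _ => ?_
  push_cast
  ring

theorem RatTrigPoly.isTwoPiPeriodic {n : ℕ} (f : RatTrigPoly n) : IsTwoPiPeriodic f :=
  fun k => (f.num_trig.isTwoPiPeriodic k).div (f.den_trig.isTwoPiPeriodic k)

theorem eI_zero (n : ℕ) (ξ : Fin n → ℝ) : eI n 0 ξ = 1 := by simp [eI]

theorem eI_mul_conj (n : ℕ) (μ ν : Fin n → ℤ) (ξ : Fin n → ℝ) :
    eI n μ ξ * conj (eI n ν ξ) = eI n (μ - ν) ξ := by
  simp only [eI, ← Complex.exp_conj, ← Complex.exp_add, map_mul, map_sum, Complex.conj_I,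
    Complex.conj_ofReal, map_intCast, Pi.sub_apply, Int.cast_sub, sub_mul, sum_sub_distrib]
  ring_nf

theorem injOn_intCast_zmod_Lambda (lam n : ℕ) :
    Set.InjOn (fun (μ : Fin n → ℤ) i => (μ i : ZMod lam)) (Lambda lam n) := by
  intro μ hμ ν hν h
  simp only [Lambda, mem_coe, Fintype.mem_piFinset, mem_Ico] at hμ hν
  funext i
  have hmod : μ i % lam = ν i % lam := (ZMod.intCast_eq_intCast_iff _ _ _).mp (congrFun h i)
  rwa [Int.emod_eq_of_lt (hμ i).1 (hμ i).2, Int.emod_eq_of_lt (hν i).1 (hν i).2] at hmod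

section Translates

variable {lam n : ℕ} [NeZero lam]

theorem sum_Ico_intCast_zmod {M : Type*} [AddCommMonoid M] (f : ZMod lam → M) :
    ∑ r ∈ Ico (0 : ℤ) lam, f r = ∑ x, f x := by
  refine sum_nbij' (fun r => (r : ZMod lam)) (fun x => (x.val : ℤ))
    (fun _ _ => mem_univ _) ?_ ?_ (by simp) (fun _ _ => rfl)
  · intro x _
    exact mem_Ico.mpr ⟨by positivity, mod_cast x.val_lt⟩
  · intro r hr
    rw [mem_Ico] at hr
    rw [ZMod.val_intCast, Int.emod_eq_of_lt hr.1 hr.2]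

theorem dil_gshift (ξ : Fin n → ℝ) (ρ : Fin n → ℤ) :
    dil lam n (gshift lam n ξ ρ) = dil lam n ξ + fun i => 2 * Real.pi * ρ i := by
  funext i
  have : (lam : ℝ) ≠ 0 := NeZero.ne _
  simp only [dil, gshift, Pi.add_apply]
  field_simp

theorem IsTwoPiPeriodic.apply_dil_gshift {α : Type*} {f : (Fin n → ℝ) → α}
    (hf : IsTwoPiPeriodic f) (ξ : Fin n → ℝ) (ρ : Fin n → ℤ) :
    f (dil lam n (gshift lam n ξ ρ)) = f (dil lam n ξ) := by
  rw [dil_gshift, hf ρ]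

theorem eI_gshift (μ ρ : Fin n → ℤ) (ξ : Fin n → ℝ) :
    eI n μ (gshift lam n ξ ρ) =
      eI n μ ξ * ∏ i, ZMod.stdAddChar ((ρ i : ZMod lam) * (μ i : ZMod lam)) := by
  simp only [eI, gshift, ← Int.cast_mul, ZMod.stdAddChar_coe]
  rw [← Complex.exp_sum, ← Complex.exp_add, mul_sum, mul_sum, ← sum_add_distrib]
  refine congrArg Complex.exp (sum_congr rfl fun i _ => ?_)
  push_cast
  ring

theorem sum_eI_gshift (μ : Fin n → ℤ) (ξ : Fin n → ℝ) :
    ∑ ρ ∈ Lambda lam n, eI n μ (gshift lam n ξ ρ) =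
      if (fun i => (μ i : ZMod lam)) = 0 then (lam : ℂ) ^ n * eI n μ ξ else 0 := by
  have hcoord (i : Fin n) :
      ∑ r ∈ Ico (0 : ℤ) lam, ZMod.stdAddChar ((r : ZMod lam) * (μ i : ZMod lam)) =
        if (μ i : ZMod lam) = 0 then (lam : ℂ) else 0 := by
    rw [sum_Ico_intCast_zmod fun x => ZMod.stdAddChar (x * (μ i : ZMod lam)),
      AddChar.sum_mulShift _ (ZMod.isPrimitive_stdAddChar lam), ZMod.card, Nat.cast_ite,
      Nat.cast_zero]
  simp only [eI_gshift, ← mul_sum, Lambda]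
  rw [← prod_univ_sum (fun _ => Ico (0 : ℤ) lam)
    fun i r => ZMod.stdAddChar ((r : ZMod lam) * (μ i : ZMod lam))]
  simp only [hcoord, prod_ite_zero, prod_const, card_univ, Fintype.card_fin, mem_univ,
    forall_const, funext_iff, Pi.zero_apply, mul_ite, mul_zero, mul_comm]

variable {ι : Type*} {ν : ι → Fin n → ℤ}

theorem sum_eI_sub_gshift [DecidableEq ι]
    (hν : Function.Injective fun l i => (ν l i : ZMod lam)) (l m : ι) (ξ : Fin n → ℝ) :
    ∑ ρ ∈ Lambda lam n, eI n (ν l - ν m) (gshift lam n ξ ρ) =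
      if l = m then (lam : ℂ) ^ n else 0 := by
  have hcongr : (fun i => ((ν l - ν m) i : ZMod lam)) = 0 ↔ l = m := by
    rw [← hν.eq_iff]
    simp [funext_iff, sub_eq_zero]
  rw [sum_eI_gshift, if_congr hcongr rfl rfl]
  split_ifs with h
  · rw [h, sub_self, eI_zero, mul_one]
  · rfl

variable [Fintype ι]

theorem sum_norm_sq_sum_mul_eI_gshift
    (hν : Function.Injective fun l i => (ν l i : ZMod lam)) (c : ι → ℂ) (ξ : Fin n → ℝ) :
    ∑ ρ ∈ Lambda lam n, ‖∑ l, c l * eI n (ν l) (gshift lam n ξ ρ)‖ ^ 2 =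
      (lam : ℝ) ^ n * ∑ l, ‖c l‖ ^ 2 := by
  classical
  have hexpand (ρ : Fin n → ℤ) :
      (‖∑ l, c l * eI n (ν l) (gshift lam n ξ ρ)‖ : ℂ) ^ 2 =
        ∑ l, ∑ m, c l * conj (c m) * eI n (ν l - ν m) (gshift lam n ξ ρ) := by
    rw [← Complex.mul_conj', map_sum, sum_mul_sum]
    simp only [map_mul, ← eI_mul_conj, mul_mul_mul_comm]
  apply Complex.ofReal_injective
  push_cast
  calc ∑ ρ ∈ Lambda lam n, (‖∑ l, c l * eI n (ν l) (gshift lam n ξ ρ)‖ : ℂ) ^ 2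
      = ∑ l, ∑ m, c l * conj (c m) *
          ∑ ρ ∈ Lambda lam n, eI n (ν l - ν m) (gshift lam n ξ ρ) := by
        simp only [hexpand, mul_sum]
        rw [sum_comm]
        exact sum_congr rfl fun l _ => sum_comm
    _ = ∑ l, (‖c l‖ : ℂ) ^ 2 * (lam : ℂ) ^ n := by
        simp only [sum_eI_sub_gshift hν, mul_ite, mul_zero, sum_ite_eq, mem_univ, if_true,
          Complex.mul_conj']
    _ = (lam : ℂ) ^ n * ∑ l, (‖c l‖ : ℂ) ^ 2 := by rw [← sum_mul, mul_comm]

theorem oblique_sum_sq_mask_translates_general (S s : (Fin n → ℝ) → ℂ)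
    (p : ι → (Fin n → ℝ) → ℂ) (hp : ∀ l, IsTwoPiPeriodic (p l))
    (hν : Function.Injective fun l i => (ν l i : ZMod lam))
    (τ : (Fin n → ℝ) → ℂ)
    (hτ : ∀ ξ, τ ξ = (((lam : ℂ) ^ n)⁻¹ * ∑ l, p l (dil lam n ξ) * eI n (ν l) ξ) / conj (s ξ))
    (ξ : Fin n → ℝ)
    (hS : ∀ ρ ∈ Lambda lam n, S (gshift lam n ξ ρ) ≠ 0)
    (hs : ∀ ρ ∈ Lambda lam n,
      ((‖s (gshift lam n ξ ρ)‖ ^ 2 : ℝ) : ℂ) = (S (gshift lam n ξ ρ))⁻¹) :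
    ∑ ρ ∈ Lambda lam n, ((‖τ (gshift lam n ξ ρ)‖ ^ 2 : ℝ) : ℂ) / S (gshift lam n ξ ρ) =
      ((lam : ℂ) ^ n)⁻¹ * ∑ l, ((‖p l (dil lam n ξ)‖ ^ 2 : ℝ) : ℂ) := by
  have hterm (ρ : Fin n → ℤ) (hρ : ρ ∈ Lambda lam n) :
      ((‖τ (gshift lam n ξ ρ)‖ ^ 2 : ℝ) : ℂ) / S (gshift lam n ξ ρ) =
        (((lam : ℂ) ^ n)⁻¹) ^ 2 *
          ((‖∑ l, p l (dil lam n ξ) * eI n (ν l) (gshift lam n ξ ρ)‖ ^ 2 : ℝ) : ℂ) := by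
    have hs_ne : (‖s (gshift lam n ξ ρ)‖ : ℂ) ≠ 0 := by
      intro h
      have := hs ρ hρ
      rw [Complex.ofReal_pow, h] at this
      exact hS ρ hρ (by simpa using this.symm)
    rw [div_eq_mul_inv, ← hs ρ hρ, hτ]
    simp only [(hp _).apply_dil_gshift, norm_div, norm_mul, norm_inv, norm_pow, RCLike.norm_conj,
      Complex.norm_natCast]
    push_cast
    field_simp
  have hlam : (lam : ℂ) ^ n ≠ 0 := pow_ne_zero n (NeZero.ne _)
  rw [sum_congr rfl hterm, ← mul_sum, ← Complex.ofReal_sum, sum_norm_sq_sum_mul_eI_gshift hν]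
  push_cast
  field_simp

end Translates

/-- with τ(ξ) = (λ^{−n} Σ_l p_l(λξ) e^{iν_l·ξ})/conj(s(ξ)) and
|s|² = 1/S wherever defined, one has
Σ_{γ∈Γ} |τ(ξ+γ)|²/S(ξ+γ) = λ^{−n} Σ_l |p_l(λξ)|² wherever everything is defined. -/
theorem oblique_sum_sq_mask_translates (lam n : ℕ) (hlam : 2 ≤ lam) (hn : 1 ≤ n)
    (S : RatTrigPoly n)
    (hSreal : ∀ ξ, S.DefinedAt ξ → (S ξ).im = 0 ∧ 0 ≤ (S ξ).re)
    (s : RatTrigPoly n)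
    (hs : ∀ ξ, s.DefinedAt ξ → S.DefinedAt ξ → S ξ ≠ 0 →
      ((‖s ξ‖ ^ 2 : ℝ) : ℂ) = (S ξ)⁻¹)
    (p : Fin (lam ^ n) → RatTrigPoly n)
    (ν : Fin (lam ^ n) → Fin n → ℤ)
    (hν_inj : Function.Injective ν) (hν_mem : ∀ l, ν l ∈ Lambda lam n)
    (hν_surj : ∀ ρ ∈ Lambda lam n, ∃ l, ν l = ρ)
    (τ : (Fin n → ℝ) → ℂ)
    (hτ : ∀ ξ, τ ξ = (((lam : ℂ) ^ n)⁻¹ * ∑ l, p l (dil lam n ξ) * eI n (ν l) ξ)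
      / (starRingEnd ℂ) (s ξ))
    (ξ : Fin n → ℝ)
    (hdef : ∀ ρ ∈ Lambda lam n,
      s.DefinedAt (gshift lam n ξ ρ) ∧ s (gshift lam n ξ ρ) ≠ 0 ∧
      S.DefinedAt (gshift lam n ξ ρ) ∧ S (gshift lam n ξ ρ) ≠ 0 ∧
      ∀ l, (p l).DefinedAt (dil lam n (gshift lam n ξ ρ)))
    (hdef' : ∀ l, (p l).DefinedAt (dil lam n ξ)) :
    ∑ ρ ∈ Lambda lam n,
        ((‖τ (gshift lam n ξ ρ)‖ ^ 2 : ℝ) : ℂ) / S (gshift lam n ξ ρ)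
      = ((lam : ℂ) ^ n)⁻¹ * ∑ l, ((‖p l (dil lam n ξ)‖ ^ 2 : ℝ) : ℂ) := by
  have : NeZero lam := ⟨by omega⟩
  exact oblique_sum_sq_mask_translates_general S s (fun l => p l) (fun l => (p l).isTwoPiPeriodic)
    (fun _ _ h => hν_inj (injOn_intCast_zmod_Lambda lam n (hν_mem _) (hν_mem _) h)) τ hτ ξ
    (fun ρ hρ => (hdef ρ hρ).2.2.2.1)
    fun ρ hρ => hs _ (hdef ρ hρ).1 (hdef ρ hρ).2.2.1 (hdef ρ hρ).2.2.2.1
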